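/- Let H be a finitely generated subgroup of a free group F. Then there exists a minimal m ≥ 0 (the dependence length of H) such that the dependence closure DepCl(H) = ∪_{i ≥ 0} Dep^i(H) equals Dep^m(H); in particular Dep^{m+1}(H) = Dep^m(H). Moreover, rank(DepCl(H)) ≤ rank(H). -/

import Mathlib

open scoped Monoid.Coprod

variable {F : Type*}

/-- The canonical homomorphism `φ_g : H ∗ ⟨x⟩ → F` from the free product of `H` with an
infinite cyclic group (the free group on one generator `x`), restricting to the inclusion
`H ↪ F` and sending `x` to `g`. -/
noncomputable def phi [Group F] (H : Subgroup F) (g : F) :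
    (↥H ∗ FreeGroup Unit) →* F :=
  Monoid.Coprod.lift H.subtype (FreeGroup.lift fun _ => g)

/-- `g` depends on `H` (is algebraic over `H`) if `φ_g` is not injective. -/
def Depends [Group F] (H : Subgroup F) (g : F) : Prop :=
  ¬ Function.Injective (phi H g)

/-- `dep H`: the set of elements of `F` that depend on `H`. -/
def depSet [Group F] (H : Subgroup F) : Set F := {g | Depends H g}

/-- `Dep H`: the subgroup generated by the elements that depend on `H`. -/
noncomputable def DepSubgroup [Group F] (H : Subgroup F) : Subgroup F :=
  Subgroup.closure (depSet H)

/-- The rank of a subgroup: the minimal cardinality of a generating set. For subgroups of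
free groups this equals the cardinality of a free basis. -/
noncomputable def rk [Group F] (H : Subgroup F) : Cardinal :=
  ⨅ S : {S : Set F // Subgroup.closure S = H}, Cardinal.mk S.1

/-!
If `g` depends on `H`, then `H ⊔ ⟨g⟩`, an image of the free group `H ∗ ⟨x⟩` of rank `rk H + 1`,
cannot itself have rank `rk H + 1`, because finitely generated free groups are residually finite
and hence Hopfian. So adjoining to `H` an element that depends on it does not raise the rank. By
monotonicity of `dep`, this persists when finitely many dependent elements are adjoined one after
another. A directed union of subgroups of rank at most `n` in a free group again has rank at most
`n`: any finite part of a basis of the union lies in one of the subgroups, and passing to the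
abelianization of the union shows that its size is at most `n`. This bounds first the rank of
`Dep H`, and then the rank of the union of the chain `Depⁱ H`. Hence this union is finitely
generated, and the chain stabilizes.
-/

universe u v

section ResidualFiniteness

theorem exists_perm_extending_mul_left {G : Type*} [Mul G] [IsLeftCancelMul G] (B : Finset G)
    (g : G) : ∃ σ : Equiv.Perm B, ∀ x y : B, g * x = y → σ x = y := by
  classical
  have hmaps : Set.MapsTo (fun x : B => g * x) {x | g * x ∈ B} (B : Set G) := fun _ hx => hx
  have hinj : Set.InjOn (fun x : B => g * x) {x | g * x ∈ B} := fun x _ y _ h =>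
    Subtype.ext (mul_left_cancel h)
  obtain ⟨σ, hσ⟩ := hmaps.exists_equiv_extend_of_card_eq (Fintype.card_coe B) hinj
  exact ⟨σ, fun x y h => Subtype.ext ((hσ x (by simp [h])).trans h)⟩

variable {α : Type*}

theorem freeGroup_lift_mk_apply_one {B : Finset (FreeGroup α)} {f : α → Equiv.Perm B}
    (hf : ∀ a (x y : B), FreeGroup.of a * (x : FreeGroup α) = (y : FreeGroup α) → f a x = y)
    (h1 : 1 ∈ B) {L : List (α × Bool)} (hL : ∀ L', L' <:+ L → FreeGroup.mk L' ∈ B) :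
    FreeGroup.lift f (FreeGroup.mk L) ⟨1, h1⟩ = ⟨FreeGroup.mk L, hL L L.suffix_refl⟩ := by
  induction L with
  | nil => rfl
  | cons p L ih =>
    obtain ⟨a, ε⟩ := p
    have hcons : FreeGroup.mk ((a, ε) :: L) = FreeGroup.mk [(a, ε)] * FreeGroup.mk L :=
      (FreeGroup.mul_mk (L₁ := [(a, ε)])).symm
    simp only [hcons, map_mul, Equiv.Perm.mul_apply,
      ih fun L' h => hL L' (h.trans (L.suffix_cons _))]
    cases ε with
    | true => simpa using hf a _ _ rfl
    | false =>
      have hinv : FreeGroup.mk [(a, false)] = (FreeGroup.of a)⁻¹ := rfl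
      simp only [hinv, map_inv, FreeGroup.lift_apply_of, Equiv.Perm.inv_eq_iff_eq]
      exact (hf a _ _ (mul_inv_cancel_left _ _)).symm

instance freeGroup_residuallyFinite : Group.ResiduallyFinite (FreeGroup α) := by
  classical
  refine Group.residuallyFinite_of_forall_exists_finite_monoidHom fun w hw => ?_
  let B : Finset (FreeGroup α) := w.toWord.tails.toFinset.image FreeGroup.mk
  have hB (L : List (α × Bool)) (hL : L <:+ w.toWord) : FreeGroup.mk L ∈ B :=
    Finset.mem_image_of_mem _ (List.mem_toFinset.mpr ((List.mem_tails _ _).mpr hL))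
  choose f hf using fun a => exists_perm_extending_mul_left B (FreeGroup.of a)
  refine ⟨Equiv.Perm B, inferInstance, inferInstance, FreeGroup.lift f, fun hfw => hw ?_⟩
  have hw1 := freeGroup_lift_mk_apply_one hf (hB [] List.nil_suffix) hB
  simp only [FreeGroup.mk_toWord, hfw, Equiv.Perm.one_apply] at hw1
  exact (congrArg Subtype.val hw1).symm

end ResidualFiniteness

section Hopfian

instance finite_monoidHom_of_fg {G Q : Type*} [Group G] [Group.FG G] [Monoid Q] [Finite Q] :
    Finite (G →* Q) := by
  obtain ⟨S, hS⟩ := Group.FG.out (G := G)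
  refine Finite.of_injective (fun (f : G →* Q) (s : S) => f s) fun f g hfg => ?_
  exact MonoidHom.eq_of_eqOn_dense hS fun s hs => congrFun hfg ⟨s, hs⟩

-- Precomposition with `ψ` permutes the finite set of homomorphisms from `G` to a finite quotient,
-- so every such homomorphism kills the kernel of `ψ`.
theorem injective_of_surjective_of_residuallyFinite {G : Type*} [Group G] [Group.FG G]
    [Group.ResiduallyFinite G] {ψ : G →* G} (hψ : Function.Surjective ψ) :
    Function.Injective ψ := by
  refine (injective_iff_map_eq_one ψ).mpr fun w hw =>
    Group.eq_one_iff_forall_finiteIndexNormalSubroup w fun N => ?_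
  have hcomp : Function.Injective fun c : G →* G ⧸ N.toSubgroup => c.comp ψ :=
    fun _ _ => (MonoidHom.cancel_right hψ).mp
  obtain ⟨c, hc⟩ := Finite.surjective_of_injective hcomp (QuotientGroup.mk' N.toSubgroup)
  have hwN : QuotientGroup.mk' N.toSubgroup w = 1 := by
    rw [← hc, MonoidHom.comp_apply, hw, map_one]
  exact (QuotientGroup.eq_one_iff w).mp hwN

theorem freeGroupBasis_injective_of_surjective {ι κ G L : Type*} [Group G] [Group L] [Finite ι]
    (b : FreeGroupBasis ι G) (c : FreeGroupBasis κ L) (e : ι ↪ κ) {f : G →* L}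
    (hf : Function.Surjective f) : Function.Injective f := by
  -- A retraction onto the free factor generated by the basis elements `c (e i)`.
  let r : L →* FreeGroup ι := c.lift (Function.extend e FreeGroup.of 1)
  have hr : r.comp (FreeGroup.lift (c ∘ e)) = MonoidHom.id (FreeGroup ι) :=
    FreeGroup.ext_hom _ _ fun i => by simp [r, e.injective.extend_apply]
  have hr_surj : Function.Surjective r :=
    Function.RightInverse.surjective (DFunLike.congr_fun hr)
  have hψ : Function.Injective (r ∘ f ∘ b.repr.symm) :=
    injective_of_surjective_of_residuallyFinite
      (ψ := r.comp (f.comp b.repr.symm.toMonoidHom))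
      (hr_surj.comp (hf.comp b.repr.symm.surjective))
  exact (b.repr.symm.toEquiv.injective_comp f).mp hψ.of_comp

end Hopfian

section FreeProduct

/-- The basis of a free product given by the disjoint union of bases of the two factors, used to
identify `H ∗ ⟨x⟩` with a free group of rank one more than that of `H`. -/
def freeGroupBasisCoprod {ι κ G L : Type*} [Group G] [Group L] (b : FreeGroupBasis ι G)
    (c : FreeGroupBasis κ L) : FreeGroupBasis (ι ⊕ κ) (G ∗ L) :=
  .ofRepr <| MonoidHom.toMulEquiv
    (Monoid.Coprod.lift (b.lift (FreeGroup.of ∘ Sum.inl)) (c.lift (FreeGroup.of ∘ Sum.inr)))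
    (FreeGroup.lift (Sum.elim (Monoid.Coprod.inl ∘ b) (Monoid.Coprod.inr ∘ c)))
    (Monoid.Coprod.hom_ext (b.ext_hom _ _ fun i => by simp) (c.ext_hom _ _ fun k => by simp))
    (FreeGroup.ext_hom _ _ fun x => by cases x <;> simp)

theorem exists_amalgam {M : Type u} {A B : Type v} [Group M] [Group A] [Group B] {f : M →* A}
    {g : M →* B} (hf : Function.Injective f) (hg : Function.Injective g) :
    ∃ (P : Type max u v) (_ : Group P) (i : A →* P) (j : B →* P),
      Function.Injective i ∧ Function.Injective j ∧ i.comp f = j.comp g := by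
  have pushout {C : Bool → Type v} [∀ k, Group (C k)] {φ : ∀ k, M →* C k}
      (hφ : ∀ k, Function.Injective (φ k)) :
      ∃ (P : Type max u v) (_ : Group P) (i : C false →* P) (j : C true →* P),
        Function.Injective i ∧ Function.Injective j ∧ i.comp (φ false) = j.comp (φ true) :=
    ⟨Monoid.PushoutI φ, inferInstance, Monoid.PushoutI.of false, Monoid.PushoutI.of true,
      Monoid.PushoutI.of_injective hφ false, Monoid.PushoutI.of_injective hφ true,
      (Monoid.PushoutI.of_comp_eq_base false).trans (Monoid.PushoutI.of_comp_eq_base true).symm⟩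
  let C : Bool → Type v := fun k => bif k then B else A
  let _ : ∀ k, Group (C k) := Bool.rec ‹Group A› ‹Group B›
  let φ : ∀ k, M →* C k := Bool.rec f g
  exact pushout (φ := φ) (Bool.rec hf hg)

-- `M ∗ N` embeds in its amalgam with `M'` over `M`, and this embedding factors through `M' ∗ N`.
theorem coprod_map_id_injective {M : Type u} {N : Type v} {M' : Type max u v} [Group M] [Group N]
    [Group M'] {f : M →* M'} (hf : Function.Injective f) :
    Function.Injective (Monoid.Coprod.map f (MonoidHom.id N)) := by
  obtain ⟨P, _, i, j, -, hj, hij⟩ :=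
    exists_amalgam hf (Monoid.Coprod.inl_injective (M := M) (N := N))
  let k : M' ∗ N →* P := Monoid.Coprod.lift i (j.comp Monoid.Coprod.inr)
  have hk : k.comp (Monoid.Coprod.map f (MonoidHom.id N)) = j := by
    ext1
    · exact hij
    · rfl
  exact Function.Injective.of_comp (f := k) (by rwa [← MonoidHom.coe_comp, hk])

end FreeProduct

section Rank

open Cardinal

variable {G : Type u} [Group G]

theorem exists_closure_eq_mk_eq_rk (H : Subgroup G) :
    ∃ S : Set G, Subgroup.closure S = H ∧ #S = rk H := by
  have : Nonempty {S : Set G // Subgroup.closure S = H} := ⟨H, H.closure_eq⟩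
  obtain ⟨⟨S, hS⟩, hcard⟩ := ciInf_mem fun S : {S : Set G // Subgroup.closure S = H} => #S.1
  exact ⟨S, hS, hcard⟩

theorem rk_closure_le (S : Set G) : rk (Subgroup.closure S) ≤ #S :=
  ciInf_le' (fun T : {T : Set G // Subgroup.closure T = Subgroup.closure S} => #T.1) ⟨S, rfl⟩

theorem rk_lt_aleph0_iff {H : Subgroup G} : rk H < ℵ₀ ↔ H.FG := by
  rw [Subgroup.fg_iff]
  constructor
  · intro h
    obtain ⟨S, hS, hcard⟩ := exists_closure_eq_mk_eq_rk H
    exact ⟨S, hS, lt_aleph0_iff_set_finite.mp (hcard.trans_lt h)⟩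
  · rintro ⟨S, rfl, hS⟩
    exact (rk_closure_le S).trans_lt (lt_aleph0_iff_set_finite.mpr hS)

theorem fg_of_rk_le {H K : Subgroup G} (hH : H.FG) (hK : rk K ≤ rk H) : K.FG :=
  rk_lt_aleph0_iff.mp (hK.trans_lt (rk_lt_aleph0_iff.mpr hH))

theorem mk_le_rk_of_linearIndependent {R : Type*} {ι V : Type u} [Ring R]
    [StrongRankCondition R] [AddCommGroup V] [Module R V] {K : Subgroup G}
    (f : K →* Multiplicative V) {x : ι → K}
    (hx : LinearIndependent R fun i => (f (x i)).toAdd) : #ι ≤ rk K := by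
  have := nontrivial_of_invariantBasisNumber R
  obtain ⟨S, rfl, hcard⟩ := exists_closure_eq_mk_eq_rk K
  let S' : Set (Subgroup.closure S) := Subtype.val ⁻¹' S
  let W : Submodule R V := Submodule.span R ((fun y => (f y).toAdd) '' S')
  have hmem (y : Subgroup.closure S) : (f y).toAdd ∈ W := by
    have hle : Subgroup.closure S' ≤ W.toAddSubgroup.toSubgroup.comap f :=
      (Subgroup.closure_le _).mpr fun z hz => Submodule.subset_span ⟨z, hz, rfl⟩
    exact hle (Subgroup.closure_closure_coe_preimage (k := S) ▸ Subgroup.mem_top y)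
  have hxW : LinearIndependent R fun i => (⟨(f (x i)).toAdd, hmem _⟩ : W) :=
    LinearIndependent.of_comp W.subtype hx
  calc #ι ≤ Module.rank R W := hxW.cardinal_le_rank
    _ ≤ #((fun y => (f y).toAdd) '' S') := rank_span_le _
    _ ≤ #S' := mk_image_le
    _ ≤ #S := mk_preimage_of_injective _ _ Subtype.val_injective
    _ = rk (Subgroup.closure S) := hcard

theorem mk_le_rk_of_basis_mem {ι : Type u} {D K : Subgroup G} (hKD : K ≤ D)
    (b : FreeGroupBasis ι D) {t : Set ι} (ht : ∀ i ∈ t, (b i : G) ∈ K) : #t ≤ rk K := by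
  -- The abelianization of `D`, in which the images of basis elements are linearly independent.
  let f : D →* Multiplicative (ι →₀ ℤ) := b.lift fun i => .ofAdd (Finsupp.single i 1)
  have hindep : LinearIndependent ℤ fun i : ι => Finsupp.single i (1 : ℤ) :=
    Finsupp.linearIndependent_single_one ℤ ι
  have hf (i : t) : f (Subgroup.inclusion hKD ⟨b i, ht i i.2⟩) = .ofAdd (Finsupp.single i 1) := by
    simp [f, Subgroup.inclusion]
  refine mk_le_rk_of_linearIndependent (R := ℤ) (f.comp (Subgroup.inclusion hKD))
    (x := fun i : t => ⟨b i, ht i i.2⟩) ?_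
  simp only [MonoidHom.comp_apply, hf, toAdd_ofAdd]
  exact hindep.comp _ Subtype.val_injective

theorem freeGroupBasis_closure_range {ι : Type*} (b : FreeGroupBasis ι G) :
    Subgroup.closure (Set.range b) = ⊤ := by
  rw [← FreeGroup.lift_surjective_iff_closure_range_eq_top]
  have hlift : FreeGroup.lift b = b.repr.symm.toMonoidHom :=
    FreeGroup.ext_hom _ _ fun _ => FreeGroup.lift_apply_of
  rw [hlift]
  exact b.repr.symm.surjective

theorem rk_eq_mk_of_basis {ι : Type u} {H : Subgroup G} (b : FreeGroupBasis ι H) :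
    rk H = #ι := by
  apply le_antisymm
  · have hclosure : Subgroup.closure (Set.range fun i => (b i : G)) = H := by
      have hrange := congrArg (Subgroup.map H.subtype) (freeGroupBasis_closure_range b)
      rwa [MonoidHom.map_closure, ← Set.range_comp, ← MonoidHom.range_eq_map, H.range_subtype]
        at hrange
    calc rk H = rk (Subgroup.closure (Set.range fun i => (b i : G))) := by rw [hclosure]
      _ ≤ #(Set.range fun i => (b i : G)) := rk_closure_le _
      _ ≤ #ι := mk_range_le
  · rw [← mk_univ]
    exact mk_le_rk_of_basis_mem le_rfl b fun i _ => (b i).2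

theorem exists_finset_subset_of_directed {ι : Type*} [Nonempty ι] {D : ι → Subgroup G}
    (hD : Directed (· ≤ ·) D) {t : Finset G} (ht : (t : Set G) ⊆ ↑(⨆ i, D i)) :
    ∃ i, (t : Set G) ⊆ D i := by
  rw [Subgroup.coe_iSup_of_directed hD] at ht
  exact Directed.exists_mem_subset_of_finset_subset_biUnion hD ht

theorem exists_iSup_eq_of_directed_of_fg {ι : Type*} [Nonempty ι] {D : ι → Subgroup G}
    (hD : Directed (· ≤ ·) D) (hfg : (⨆ i, D i).FG) : ∃ j, ⨆ i, D i = D j := by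
  obtain ⟨S, hS⟩ := hfg
  obtain ⟨i, hi⟩ := exists_finset_subset_of_directed hD (hS ▸ Subgroup.subset_closure)
  exact ⟨i, le_antisymm (hS.ge.trans ((Subgroup.closure_le _).mpr hi)) (le_iSup D i)⟩

theorem rk_iSup_le_of_directed [IsFreeGroup G] {ι : Type*} [Nonempty ι] {D : ι → Subgroup G}
    (hD : Directed (· ≤ ·) D) {c : Cardinal} (hc : c < ℵ₀) (h : ∀ i, rk (D i) ≤ c) :
    rk (⨆ i, D i) ≤ c := by
  classical
  obtain ⟨n, rfl⟩ := lt_aleph0.mp hc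
  obtain ⟨κ, ⟨b⟩⟩ := IsFreeGroup.nonempty_basis (G := ↥(⨆ i, D i))
  rw [rk_eq_mk_of_basis b]
  refine card_le_of fun t => ?_
  have hsub : (t.image fun k => (b k : G) : Set G) ⊆ ↑(⨆ i, D i) := by
    simp [Set.subset_def]
  obtain ⟨j, hj⟩ := exists_finset_subset_of_directed hD hsub
  have ht : #(t : Set κ) ≤ rk (D j) := mk_le_rk_of_basis_mem (le_iSup D j) b fun k hk =>
    hj (Finset.mem_coe.mpr (Finset.mem_image_of_mem _ hk))
  simpa using ht.trans (h j)

end Rank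

section Dependence

variable {G : Type u} [Group G]

theorem range_phi (H : Subgroup G) (g : G) : (phi H g).range = H ⊔ Subgroup.closure {g} := by
  rw [phi, Monoid.Coprod.range_lift, H.range_subtype, FreeGroup.range_lift_eq_closure,
    Set.range_const]

theorem phi_comp_map_inclusion {H K : Subgroup G} (h : H ≤ K) (g : G) :
    (phi K g).comp (Monoid.Coprod.map (Subgroup.inclusion h) (MonoidHom.id _)) = phi H g := by
  ext <;> simp [phi]

theorem depSet_mono : Monotone (depSet (F := G)) := fun H K h g hg hK => hg <| by
  rw [← phi_comp_map_inclusion h]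
  exact hK.comp (coprod_map_id_injective (Subgroup.inclusion_injective h))

theorem subset_depSet (H : Subgroup G) : (H : Set G) ⊆ depSet H := fun h hh hinj => by
  have heq : (Monoid.Coprod.inl ⟨h, hh⟩ : H ∗ FreeGroup Unit) =
      Monoid.Coprod.inr (FreeGroup.of ()) := hinj (by simp [phi])
  simpa using congrArg Monoid.Coprod.snd heq

theorem le_depSubgroup (H : Subgroup G) : H ≤ DepSubgroup H :=
  (subset_depSet H).trans Subgroup.subset_closure

theorem depSubgroup_eq_iSup (H : Subgroup G) : DepSubgroup H =
    ⨆ T : Finset (depSet H), H ⊔ Subgroup.closure (Subtype.val '' (T : Set (depSet H))) := by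
  refine le_antisymm ((Subgroup.closure_le _).mpr fun g hg => ?_) (iSup_le fun T => ?_)
  · refine le_iSup (fun T : Finset (depSet H) =>
      H ⊔ Subgroup.closure (Subtype.val '' (T : Set (depSet H)))) {⟨g, hg⟩} ?_
    exact Subgroup.mem_sup_right (Subgroup.subset_closure (by simp))
  · exact sup_le (le_depSubgroup H)
      (Subgroup.closure_mono (Subtype.coe_image_subset _ _))

theorem monotone_iterate_depSubgroup (H : Subgroup G) : Monotone fun i => DepSubgroup^[i] H :=
  monotone_nat_of_le_succ fun i => by
    rw [Function.iterate_succ_apply']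
    exact le_depSubgroup _

variable [IsFreeGroup G]

theorem phi_injective_of_rk_lt {H : Subgroup G} (hH : H.FG) {g : G}
    (h : rk H < rk (H ⊔ Subgroup.closure {g})) : Function.Injective (phi H g) := by
  obtain ⟨ι, ⟨b⟩⟩ := IsFreeGroup.nonempty_basis (G := H)
  obtain ⟨κ, ⟨c⟩⟩ := IsFreeGroup.nonempty_basis (G := (phi H g).range)
  have : Finite ι := by
    rwa [← Cardinal.lt_aleph0_iff_finite, ← rk_eq_mk_of_basis b, rk_lt_aleph0_iff]
  rw [← range_phi, rk_eq_mk_of_basis b, rk_eq_mk_of_basis c] at h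
  obtain ⟨e⟩ : Nonempty (ι ⊕ Unit ↪ κ) := by
    rw [← Cardinal.le_def, Cardinal.mk_sum]
    simpa using Cardinal.add_one_le_of_lt h
  have hinj : Function.Injective (phi H g).rangeRestrict :=
    freeGroupBasis_injective_of_surjective
      (freeGroupBasisCoprod b (FreeGroupBasis.ofFreeGroup Unit)) c e
      (phi H g).rangeRestrict_surjective
  exact (phi H g).range.subtype_injective.comp hinj

theorem rk_sup_closure_singleton_le {H : Subgroup G} (hH : H.FG) {g : G} (hg : g ∈ depSet H) :
    rk (H ⊔ Subgroup.closure {g}) ≤ rk H :=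
  not_lt.mp fun h => hg (phi_injective_of_rk_lt hH h)

theorem rk_sup_closure_le {H : Subgroup G} (hH : H.FG) (T : Finset (depSet H)) :
    rk (H ⊔ Subgroup.closure (Subtype.val '' (T : Set (depSet H)))) ≤ rk H := by
  classical
  induction T using Finset.induction_on with
  | empty => simp
  | insert g T _ ih =>
    rw [Finset.coe_insert, Set.image_insert_eq, Set.insert_eq, Set.union_comm,
      Subgroup.closure_union, ← sup_assoc]
    exact (rk_sup_closure_singleton_le (fg_of_rk_le hH ih) (depSet_mono le_sup_left g.2)).trans ih

theorem rk_depSubgroup_le {H : Subgroup G} (hH : H.FG) : rk (DepSubgroup H) ≤ rk H := by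
  have hmono : Monotone fun T : Finset (depSet H) =>
      H ⊔ Subgroup.closure (Subtype.val '' (T : Set (depSet H))) := fun T T' h =>
    sup_le_sup_left (Subgroup.closure_mono (Set.image_mono h)) H
  rw [depSubgroup_eq_iSup]
  exact rk_iSup_le_of_directed hmono.directed_le (rk_lt_aleph0_iff.mpr hH) (rk_sup_closure_le hH)

theorem rk_iterate_depSubgroup_le {H : Subgroup G} (hH : H.FG) (i : ℕ) :
    rk (DepSubgroup^[i] H) ≤ rk H := by
  induction i with
  | zero => exact le_rfl
  | succ i ih =>
    rw [Function.iterate_succ_apply']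
    exact (rk_depSubgroup_le (fg_of_rk_le hH ih)).trans ih

end Dependence

/-- for finitely generated `H` there is a minimal `m` (the dependence
length) with `DepCl H = ⋃ᵢ Depⁱ H = Dep^m H`; in particular `Dep^(m+1) H = Dep^m H`.
Moreover `rank (DepCl H) ≤ rank H`. -/
theorem dependence_closure_stabilizes [Group F] [IsFreeGroup F] (H : Subgroup F)
    (hH : H.FG) :
    ∃ m : ℕ,
      (⨆ i, DepSubgroup^[i] H) = DepSubgroup^[m] H ∧
      (∀ k, (⨆ i, DepSubgroup^[i] H) = DepSubgroup^[k] H → m ≤ k) ∧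
      DepSubgroup^[m + 1] H = DepSubgroup^[m] H ∧
      rk (⨆ i, DepSubgroup^[i] H) ≤ rk H := by
  classical
  have hmono := monotone_iterate_depSubgroup H
  have hrk : rk (⨆ i, DepSubgroup^[i] H) ≤ rk H :=
    rk_iSup_le_of_directed hmono.directed_le (rk_lt_aleph0_iff.mpr hH)
      (rk_iterate_depSubgroup_le hH)
  have hstab : ∃ m, (⨆ i, DepSubgroup^[i] H) = DepSubgroup^[m] H :=
    exists_iSup_eq_of_directed_of_fg hmono.directed_le (fg_of_rk_le hH hrk)
  refine ⟨Nat.find hstab, Nat.find_spec hstab, fun _ => Nat.find_min' hstab, ?_, hrk⟩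
  refine le_antisymm ?_ (hmono (Nat.le_succ _))
  exact (le_iSup (fun i => DepSubgroup^[i] H) _).trans_eq (Nat.find_spec hstab)
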